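/- Let m and n be positive integers, let A = (n+1)^{n+1}/n^n, B = n/(n+1), and δ ≥ 0 real, and let f(t) = (A t^n (1−t))^m. Set λ₀ = 2(B^n − B^{n+1})^m (mn+m+1)!/(m!·(mn)!). Then λ₀ ≤ (∫₀¹ (1+δt)² |f′(t)| dt)/(∫₀¹ f(t) dt) ≤ (1+δ)² λ₀. -/

import Mathlib

/-!
For `f` vanishing at both ends of `[0, 1]`, increasing up to `M` and decreasing afterwards, the
total variation `∫ |f′|` is `2 f(M)`; a monotone weight changes this integral by a factor between
its two end values. The power `(A tⁿ (1 - t))^m` is a constant multiple of `t^(mn) (1 - t)^m`,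
which increases up to `mn / (mn + m) = n / (n + 1)` and whose integral is a beta value. The constant
cancels from the quotient.
-/

open MeasureTheory Set

lemma integral_abs_deriv_of_monotoneOn {f : ℝ → ℝ} {a b : ℝ} (hab : a ≤ b)
    (hcont : ContinuousOn f (Icc a b)) (hdiff : DifferentiableOn ℝ f (Ioo a b))
    (hmono : MonotoneOn f (Icc a b)) :
    ∫ t in a..b, |deriv f t| = f b - f a := by
  have deriv_nonneg : ∀ t ∈ Ioo a b, 0 ≤ deriv f t := fun t ht ↦ by
    rw [← derivWithin_of_mem_nhds (Icc_mem_nhds ht.1 ht.2)]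
    exact hmono.derivWithin_nonneg
  calc ∫ t in a..b, |deriv f t|
      = ∫ t in a..b, deriv f t := intervalIntegral.integral_congr_Ioo_of_le hab fun t ht ↦
        abs_of_nonneg (deriv_nonneg t ht)
    _ = f b - f a := intervalIntegral.integral_eq_sub_of_hasDerivAt_of_le hab hcont
        (fun t ht ↦ (hdiff.differentiableAt (Ioo_mem_nhds ht.1 ht.2)).hasDerivAt)
        (MonotoneOn.intervalIntegrable_deriv (by rwa [uIcc_of_le hab]))

lemma integral_abs_deriv_of_antitoneOn {f : ℝ → ℝ} {a b : ℝ} (hab : a ≤ b)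
    (hcont : ContinuousOn f (Icc a b)) (hdiff : DifferentiableOn ℝ f (Ioo a b))
    (hanti : AntitoneOn f (Icc a b)) :
    ∫ t in a..b, |deriv f t| = f a - f b := by
  have h := integral_abs_deriv_of_monotoneOn hab hcont.neg hdiff.neg hanti.neg
  simp only [deriv.neg, abs_neg, Pi.neg_apply] at h
  rw [h, neg_sub_neg]

lemma intervalIntegrable_deriv_of_antitoneOn {f : ℝ → ℝ} {a b : ℝ}
    (hanti : AntitoneOn f (uIcc a b)) : IntervalIntegrable (deriv f) volume a b := by
  simpa only [Pi.neg_def, deriv.fun_neg', neg_neg] using hanti.neg.intervalIntegrable_deriv.neg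

section Unimodal

variable {f : ℝ → ℝ} {a b c : ℝ}

lemma intervalIntegrable_deriv_of_monotoneOn_of_antitoneOn (hac : a ≤ c) (hcb : c ≤ b)
    (hmono : MonotoneOn f (Icc a c)) (hanti : AntitoneOn f (Icc c b)) :
    IntervalIntegrable (deriv f) volume a b := by
  rw [← uIcc_of_le hac] at hmono
  rw [← uIcc_of_le hcb] at hanti
  exact hmono.intervalIntegrable_deriv.trans (intervalIntegrable_deriv_of_antitoneOn hanti)

lemma integral_abs_deriv_of_monotoneOn_of_antitoneOn (hac : a ≤ c) (hcb : c ≤ b)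
    (hcont : ContinuousOn f (Icc a b)) (hdiff : DifferentiableOn ℝ f (Ioo a b))
    (hmono : MonotoneOn f (Icc a c)) (hanti : AntitoneOn f (Icc c b)) :
    ∫ t in a..b, |deriv f t| = 2 * f c - f a - f b := by
  have hint := intervalIntegrable_deriv_of_monotoneOn_of_antitoneOn hac hcb hmono hanti
  have hc : c ∈ uIcc a b := by rw [uIcc_of_le (hac.trans hcb)]; exact ⟨hac, hcb⟩
  rw [← intervalIntegral.integral_add_adjacent_intervals
      (hint.mono_set (uIcc_subset_uIcc_left hc)).abs
      (hint.mono_set (uIcc_subset_uIcc_right hc)).abs,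
    integral_abs_deriv_of_monotoneOn hac (hcont.mono (Icc_subset_Icc_right hcb))
      (hdiff.mono (Ioo_subset_Ioo_right hcb)) hmono,
    integral_abs_deriv_of_antitoneOn hcb (hcont.mono (Icc_subset_Icc_left hac))
      (hdiff.mono (Ioo_subset_Ioo_left hac)) hanti]
  ring

end Unimodal

section MonotoneWeight

variable {w g : ℝ → ℝ} {a b : ℝ}

lemma intervalIntegrable_mul_of_monotoneOn (hw : MonotoneOn w (uIcc a b))
    (hg : IntervalIntegrable g volume a b) :
    IntervalIntegrable (fun t ↦ w t * g t) volume a b := by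
  have w_bounded : ∀ t ∈ uIoc a b, ‖w t‖ ≤ max |w (min a b)| |w (max a b)| := fun t ht ↦
    abs_le_max_abs_abs
      (hw (left_mem_Icc.2 inf_le_sup) (uIoc_subset_uIcc ht) ht.1.le)
      (hw (uIoc_subset_uIcc ht) (right_mem_Icc.2 inf_le_sup) ht.2)
  rw [intervalIntegrable_iff] at hg ⊢
  exact hg.bdd_mul hw.intervalIntegrable.def'.aestronglyMeasurable
    (ae_restrict_of_forall_mem measurableSet_uIoc w_bounded)

lemma mul_integral_le_integral_mul_of_monotoneOn (hab : a ≤ b) (hw : MonotoneOn w (Icc a b))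
    (hg : IntervalIntegrable g volume a b) (hg0 : ∀ t ∈ Icc a b, 0 ≤ g t) :
    w a * ∫ t in a..b, g t ≤ ∫ t in a..b, w t * g t := by
  rw [← intervalIntegral.integral_const_mul]
  refine intervalIntegral.integral_mono_on hab (hg.const_mul _)
    (intervalIntegrable_mul_of_monotoneOn (by rwa [uIcc_of_le hab]) hg) fun t ht ↦ ?_
  exact mul_le_mul_of_nonneg_right (hw (left_mem_Icc.2 hab) ht ht.1) (hg0 t ht)

lemma integral_mul_le_mul_integral_of_monotoneOn (hab : a ≤ b) (hw : MonotoneOn w (Icc a b))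
    (hg : IntervalIntegrable g volume a b) (hg0 : ∀ t ∈ Icc a b, 0 ≤ g t) :
    ∫ t in a..b, w t * g t ≤ w b * ∫ t in a..b, g t := by
  rw [← intervalIntegral.integral_const_mul]
  refine intervalIntegral.integral_mono_on hab
    (intervalIntegrable_mul_of_monotoneOn (by rwa [uIcc_of_le hab]) hg) (hg.const_mul _)
    fun t ht ↦ ?_
  exact mul_le_mul_of_nonneg_right (hw ht (right_mem_Icc.2 hab) ht.2) (hg0 t ht)

end MonotoneWeight

/-- The unnormalised density `t ^ a * (1 - t) ^ b` of the beta distribution with parameters `a + 1`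
and `b + 1`. The powers are real powers, so the formula is meaningful only for `t ∈ [0, 1]`
unless the exponents are natural numbers. -/
noncomputable def betaKernel (a b t : ℝ) : ℝ :=
  t ^ a * (1 - t) ^ b

namespace betaKernel

lemma apply_zero {a : ℝ} (ha : a ≠ 0) (b : ℝ) : betaKernel a b 0 = 0 := by
  simp [betaKernel, Real.zero_rpow ha]

lemma apply_one (a : ℝ) {b : ℝ} (hb : b ≠ 0) : betaKernel a b 1 = 0 := by
  simp [betaKernel, Real.zero_rpow hb]

lemma nonneg (a b : ℝ) {t : ℝ} (ht : t ∈ Icc 0 1) : 0 ≤ betaKernel a b t :=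
  mul_nonneg (Real.rpow_nonneg ht.1 a) (Real.rpow_nonneg (sub_nonneg.2 ht.2) b)

lemma natCast_mul_natCast (m n : ℕ) (t : ℝ) :
    betaKernel (m * n) m t = (t ^ n * (1 - t)) ^ m := by
  rw [betaKernel, ← Nat.cast_mul, Real.rpow_natCast, Real.rpow_natCast, mul_pow, ← pow_mul,
    mul_comm n m]

lemma pow_mul_natCast_mul_natCast (m n : ℕ) (A t : ℝ) :
    A ^ m * betaKernel (m * n) m t = (A * t ^ n * (1 - t)) ^ m := by
  rw [natCast_mul_natCast, ← mul_pow, ← mul_assoc]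

protected lemma continuous {a b : ℝ} (ha : 0 ≤ a) (hb : 0 ≤ b) : Continuous (betaKernel a b) :=
  (Real.continuous_rpow_const ha).mul
    ((Real.continuous_rpow_const hb).comp (continuous_const.sub continuous_id))

lemma hasDerivAt (a b : ℝ) {t : ℝ} (ht : t ∈ Ioo 0 1) :
    HasDerivAt (betaKernel a b) (betaKernel a b t * (a / t - b / (1 - t))) t := by
  have ht0 : t ≠ 0 := ht.1.ne'
  have ht1 : 1 - t ≠ 0 := (sub_pos.2 ht.2).ne'
  have hleft := Real.hasDerivAt_rpow_const (p := a) (Or.inl ht0)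
  have hright := ((hasDerivAt_id t).const_sub 1).rpow_const (p := b) (Or.inl ht1)
  refine (hleft.mul hright).congr_deriv ?_
  simp only [betaKernel, id, Real.rpow_sub_one ht0, Real.rpow_sub_one ht1]
  ring

lemma differentiableOn (a b : ℝ) : DifferentiableOn ℝ (betaKernel a b) (Ioo 0 1) :=
  fun _ ht ↦ (hasDerivAt a b ht).differentiableAt.differentiableWithinAt

section Unimodal

variable {a b : ℝ}

lemma mode_mem_Icc (ha : 0 < a) (hb : 0 < b) : a / (a + b) ∈ Icc (0 : ℝ) 1 :=
  ⟨by positivity, (div_le_one (by positivity)).2 (by linarith)⟩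

lemma monotoneOn_Icc_mode (ha : 0 < a) (hb : 0 < b) :
    MonotoneOn (betaKernel a b) (Icc 0 (a / (a + b))) := by
  refine monotoneOn_of_deriv_nonneg (convex_Icc _ _)
    (betaKernel.continuous ha.le hb.le).continuousOn ?_ ?_ <;> rw [interior_Icc]
  · exact (differentiableOn a b).mono (Ioo_subset_Ioo_right (mode_mem_Icc ha hb).2)
  · intro t ht
    have ht01 : t ∈ Ioo 0 1 := ⟨ht.1, ht.2.trans_le (mode_mem_Icc ha hb).2⟩
    have ht_mode : t * (a + b) < a := (lt_div_iff₀ (by positivity)).1 ht.2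
    rw [(hasDerivAt a b ht01).deriv]
    refine mul_nonneg (nonneg a b (Ioo_subset_Icc_self ht01)) (sub_nonneg.2 ?_)
    rw [div_le_div_iff₀ (sub_pos.2 ht01.2) ht01.1]
    linarith

lemma antitoneOn_Icc_mode (ha : 0 < a) (hb : 0 < b) :
    AntitoneOn (betaKernel a b) (Icc (a / (a + b)) 1) := by
  refine antitoneOn_of_deriv_nonpos (convex_Icc _ _)
    (betaKernel.continuous ha.le hb.le).continuousOn ?_ ?_ <;> rw [interior_Icc]
  · exact (differentiableOn a b).mono (Ioo_subset_Ioo_left (mode_mem_Icc ha hb).1)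
  · intro t ht
    have ht01 : t ∈ Ioo 0 1 := ⟨(mode_mem_Icc ha hb).1.trans_lt ht.1, ht.2⟩
    have ht_mode : a < t * (a + b) := (div_lt_iff₀ (by positivity)).1 ht.1
    rw [(hasDerivAt a b ht01).deriv]
    refine mul_nonpos_of_nonneg_of_nonpos (nonneg a b (Ioo_subset_Icc_self ht01))
      (sub_nonpos.2 ?_)
    rw [div_le_div_iff₀ ht01.1 (sub_pos.2 ht01.2)]
    linarith

lemma intervalIntegrable_deriv (ha : 0 < a) (hb : 0 < b) :
    IntervalIntegrable (deriv (betaKernel a b)) volume 0 1 :=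
  intervalIntegrable_deriv_of_monotoneOn_of_antitoneOn (mode_mem_Icc ha hb).1
    (mode_mem_Icc ha hb).2 (monotoneOn_Icc_mode ha hb) (antitoneOn_Icc_mode ha hb)

lemma integral_abs_deriv (ha : 0 < a) (hb : 0 < b) :
    ∫ t in (0 : ℝ)..1, |deriv (betaKernel a b) t| = 2 * betaKernel a b (a / (a + b)) := by
  rw [integral_abs_deriv_of_monotoneOn_of_antitoneOn (mode_mem_Icc ha hb).1 (mode_mem_Icc ha hb).2
      (betaKernel.continuous ha.le hb.le).continuousOn (differentiableOn a b)
      (monotoneOn_Icc_mode ha hb) (antitoneOn_Icc_mode ha hb),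
    apply_zero ha.ne', apply_one a hb.ne', sub_zero, sub_zero]

end Unimodal

lemma integral_eq_beta {a b : ℝ} (ha : -1 < a) (hb : -1 < b) :
    ∫ t in (0 : ℝ)..1, betaKernel a b t = ProbabilityTheory.beta (a + 1) (b + 1) := by
  have complex_eq : Complex.betaIntegral ↑(a + 1) ↑(b + 1) =
      ↑(∫ t in (0 : ℝ)..1, betaKernel a b t) := by
    rw [Complex.betaIntegral, ← intervalIntegral.integral_ofReal]
    refine intervalIntegral.integral_congr fun t ht ↦ ?_
    rw [uIcc_of_le zero_le_one] at ht
    simp only [betaKernel, Complex.ofReal_mul, Complex.ofReal_cpow ht.1,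
      Complex.ofReal_cpow (sub_nonneg.2 ht.2), Complex.ofReal_add, Complex.ofReal_sub,
      Complex.ofReal_one, add_sub_cancel_right]
  rw [ProbabilityTheory.beta_eq_betaIntegralReal _ _ (by linarith) (by linarith), complex_eq,
    Complex.ofReal_re]

end betaKernel

lemma beta_natCast_add_one (p q : ℕ) :
    ProbabilityTheory.beta (p + 1) (q + 1) =
      (p.factorial * q.factorial : ℝ) / (p + q + 1).factorial := by
  rw [ProbabilityTheory.beta, Real.Gamma_nat_eq_factorial, Real.Gamma_nat_eq_factorial,
    ← Real.Gamma_nat_eq_factorial (p + q + 1)]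
  push_cast
  ring_nf

lemma two_mul_betaKernel_mode_div_beta {m : ℕ} (hm : m ≠ 0) (n : ℕ) :
    2 * betaKernel (m * n) m (m * n / (m * n + m)) / ProbabilityTheory.beta (m * n + 1) (m + 1) =
      2 * (((n : ℝ) / (n + 1)) ^ n - ((n : ℝ) / (n + 1)) ^ (n + 1)) ^ m *
        (m * n + m + 1).factorial / (m.factorial * (m * n).factorial) := by
  have mode_eq : (m * n : ℝ) / (m * n + m) = n / (n + 1) := by field_simp
  have beta_eq := beta_natCast_add_one (m * n) m
  rw [Nat.cast_mul] at beta_eq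
  rw [mode_eq, betaKernel.natCast_mul_natCast, beta_eq, div_div_eq_mul_div, mul_one_sub, ← pow_succ,
    mul_comm (m.factorial : ℝ)]

lemma monotoneOn_one_add_mul_pow {δ : ℝ} (hδ : 0 ≤ δ) (k : ℕ) :
    MonotoneOn (fun t ↦ (1 + δ * t) ^ k) (Ici 0) := fun s hs t _ hst ↦ by
  have : 0 ≤ δ * s := mul_nonneg hδ hs
  dsimp only
  gcongr

theorem F_one_bounds_general {a b c : ℝ} (ha : 0 < a) (hb : 0 < b) (hc : 0 < c) {w : ℝ → ℝ}
    (hw : MonotoneOn w (Icc 0 1)) :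
    w 0 * (2 * betaKernel a b (a / (a + b)) / ProbabilityTheory.beta (a + 1) (b + 1)) ≤
      (∫ t in (0 : ℝ)..1, w t * |deriv (fun t ↦ c * betaKernel a b t) t|) /
        (∫ t in (0 : ℝ)..1, c * betaKernel a b t) ∧
    (∫ t in (0 : ℝ)..1, w t * |deriv (fun t ↦ c * betaKernel a b t) t|) /
        (∫ t in (0 : ℝ)..1, c * betaKernel a b t) ≤
      w 1 * (2 * betaKernel a b (a / (a + b)) / ProbabilityTheory.beta (a + 1) (b + 1)) := by
  have beta_nonneg : 0 ≤ ProbabilityTheory.beta (a + 1) (b + 1) :=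
    (ProbabilityTheory.beta_pos (by linarith) (by linarith)).le
  have hint := (betaKernel.intervalIntegrable_deriv ha hb).abs
  have hnonneg : ∀ t ∈ Icc (0 : ℝ) 1, 0 ≤ |deriv (betaKernel a b) t| := fun _ _ ↦ abs_nonneg _
  simp only [deriv_const_mul_field, abs_mul, abs_of_pos hc, mul_left_comm _ c,
    intervalIntegral.integral_const_mul, mul_div_mul_left _ _ hc.ne',
    betaKernel.integral_eq_beta (by linarith : -1 < a) (by linarith : -1 < b),
    ← betaKernel.integral_abs_deriv ha hb, ← mul_div_assoc]
  exact ⟨div_le_div_of_nonneg_right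
      (mul_integral_le_integral_mul_of_monotoneOn zero_le_one hw hint hnonneg) beta_nonneg,
    div_le_div_of_nonneg_right
      (integral_mul_le_mul_integral_of_monotoneOn zero_le_one hw hint hnonneg) beta_nonneg⟩

/-- With `A = (n+1)^{n+1}/nⁿ`, `B = n/(n+1)`, `f(t) = (A tⁿ (1−t))^m` and
`λ₀ = 2(Bⁿ − B^{n+1})^m (mn+m+1)!/(m!·(mn)!)`, we have
`λ₀ ≤ (∫₀¹ (1+δt)² |f′(t)| dt)/(∫₀¹ f(t) dt) ≤ (1+δ)² λ₀`. -/
theorem F_one_bounds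
    (m n : ℕ) (hm : 0 < m) (hn : 0 < n) (δ : ℝ) (hδ : 0 ≤ δ) :
    2 * (((n : ℝ) / (n + 1)) ^ n - ((n : ℝ) / (n + 1)) ^ (n + 1)) ^ m *
        (Nat.factorial (m * n + m + 1)) /
        ((Nat.factorial m) * (Nat.factorial (m * n))) ≤
      (∫ t in (0 : ℝ)..1, (1 + δ * t) ^ 2 *
          |deriv (fun t : ℝ =>
            (((n : ℝ) + 1) ^ (n + 1) / (n : ℝ) ^ n * t ^ n * (1 - t)) ^ m) t|) /
        (∫ t in (0 : ℝ)..1,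
          (((n : ℝ) + 1) ^ (n + 1) / (n : ℝ) ^ n * t ^ n * (1 - t)) ^ m) ∧
    (∫ t in (0 : ℝ)..1, (1 + δ * t) ^ 2 *
        |deriv (fun t : ℝ =>
          (((n : ℝ) + 1) ^ (n + 1) / (n : ℝ) ^ n * t ^ n * (1 - t)) ^ m) t|) /
      (∫ t in (0 : ℝ)..1,
        (((n : ℝ) + 1) ^ (n + 1) / (n : ℝ) ^ n * t ^ n * (1 - t)) ^ m) ≤
      (1 + δ) ^ 2 *
        (2 * (((n : ℝ) / (n + 1)) ^ n - ((n : ℝ) / (n + 1)) ^ (n + 1)) ^ m *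
          (Nat.factorial (m * n + m + 1)) /
          ((Nat.factorial m) * (Nat.factorial (m * n)))) := by
  have hm' : (0 : ℝ) < m := Nat.cast_pos.2 hm
  have hn' : (0 : ℝ) < n := Nat.cast_pos.2 hn
  have hA : 0 < ((n : ℝ) + 1) ^ (n + 1) / (n : ℝ) ^ n := by positivity
  simpa only [betaKernel.pow_mul_natCast_mul_natCast, two_mul_betaKernel_mode_div_beta hm.ne',
    mul_zero, mul_one, add_zero, one_pow, one_mul] using
    F_one_bounds_general (mul_pos hm' hn') hm' (pow_pos hA m)
      ((monotoneOn_one_add_mul_pow hδ 2).mono Icc_subset_Ici_self)
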